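/- Let x > 0 be real with x not an integer. Then ∑_{n=1}^∞ σ_{1/2}(n) n^{−1/2} e^{−2π√(2nx)} sin(π/4 + 2π√(2nx)) = (1/2)·{ (1/(π√x) − 1/√2)·ζ(1/2) − (1/(πx√2))·ζ(−1/2) } + (x/(π√2)) ∑_{n=1}^∞ σ_{1/2}(n) n^{−1/2} (√(2x) − √n)/(x² + n²). -/

import Mathlib

open Complex Finset
open scoped Real BigOperators Classical

/-- Generalized divisor sum `σ_r(n) = ∑_{d ∣ n} d^r` with real exponent. -/
noncomputable def rsigma (r : ℝ) (n : ℕ) : ℝ := ∑ d ∈ n.divisors, (d : ℝ) ^ r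

/-! Write `b(t) = 1 / (e ^ (2πt) - 1)` and compute `∫ b(s v²) b(s / v²) dv` over `(0, ∞)` twice.
Expanding both factors into geometric series leaves the integrals of
`exp (-2πs (m v² + k / v²))`, which the Cauchy–Schlömilch substitution evaluates; they add up to a
multiple of `∑ σ_{-1/2}(n) exp (-4πs√n)`. Subtracting instead from both factors the leading terms
`1 / (2πt) - 1 / 2` of `b(t)` at `0` and expanding the remainders by the partial fractions of the
cotangent gives `∑ σ_{-1/2}(n) / ((s + √n)(s² + n))`, while the leading terms contribute `ζ(1/2)`
and `ζ(3/2)`. The resulting identity, valid for `0 < s < 1`, extends analytically to `0 < Re s`. At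
`s = √(x/2) (1 - i)`, multiplied by `1 + i`, its imaginary part is the claim, by
`σ_{1/2}(n) = √n σ_{-1/2}(n)` and the functional equation relating `ζ(-1/2)` to `ζ(3/2)`. -/

open MeasureTheory Filter Topology

section Integration

lemma integrable_of_hasSum_of_nonneg {α ι : Type*} [Countable ι] [MeasurableSpace α]
    {μ : Measure α} {F : ι → α → ℝ} {g : α → ℝ} (hF : ∀ i, Integrable (F i) μ)
    (hF0 : ∀ i, 0 ≤ᵐ[μ] F i) (hFg : ∀ᵐ a ∂μ, HasSum (fun i => F i a) (g a))
    (hsum : Summable fun i => ∫ a, F i a ∂μ) : Integrable g μ := by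
  have hmeas : AEStronglyMeasurable g μ :=
    aestronglyMeasurable_of_tendsto_ae atTop
      (fun s => (integrable_finsetSum s fun i _ => hF i).aestronglyMeasurable) hFg
  refine ⟨hmeas, ?_⟩
  have hF0' : ∀ᵐ a ∂μ, ∀ i, 0 ≤ F i a := ae_all_iff.2 hF0
  calc ∫⁻ a, ‖g a‖ₑ ∂μ = ∫⁻ a, ∑' i, ENNReal.ofReal (F i a) ∂μ := by
        refine lintegral_congr_ae ?_
        filter_upwards [hFg, hF0'] with a ha ha0
        rw [Real.enorm_of_nonneg (ha.nonneg ha0), ← ha.tsum_eq,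
          ENNReal.ofReal_tsum_of_nonneg ha0 ha.summable]
    _ = ∑' i, ENNReal.ofReal (∫ a, F i a ∂μ) := by
        rw [lintegral_tsum fun i => (hF i).aestronglyMeasurable.aemeasurable.ennreal_ofReal]
        exact tsum_congr fun i => (ofReal_integral_eq_lintegral_ofReal (hF i) (hF0 i)).symm
    _ < ⊤ := by
        rw [← ENNReal.ofReal_tsum_of_nonneg (fun i => integral_nonneg_of_ae (hF0 i)) hsum]
        exact ENNReal.ofReal_lt_top

/-- `HasIntegralIoi f A`: the function `f` is integrable on `(0, ∞)` with integral `A`. Bundling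
both facts, as `HasMellin` does, lets integrals be combined without separate integrability
arguments. -/
def HasIntegralIoi (f : ℝ → ℝ) (A : ℝ) : Prop :=
  IntegrableOn f (Set.Ioi 0) ∧ ∫ v in Set.Ioi 0, f v = A

namespace HasIntegralIoi

variable {f g : ℝ → ℝ} {A B : ℝ}

lemma congr (hf : HasIntegralIoi f A) (h : ∀ v, 0 < v → f v = g v) : HasIntegralIoi g A :=
  ⟨hf.1.congr_fun h measurableSet_Ioi,
    (setIntegral_congr_fun measurableSet_Ioi fun v hv => (h v hv).symm).trans hf.2⟩

lemma unique (hA : HasIntegralIoi f A) (hB : HasIntegralIoi f B) : A = B :=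
  hA.2.symm.trans hB.2

lemma add (hf : HasIntegralIoi f A) (hg : HasIntegralIoi g B) :
    HasIntegralIoi (fun v => f v + g v) (A + B) :=
  ⟨hf.1.add hg.1, by rw [integral_add hf.1 hg.1, hf.2, hg.2]⟩

lemma const_mul (hf : HasIntegralIoi f A) (c : ℝ) : HasIntegralIoi (fun v => c * f v) (c * A) :=
  ⟨Integrable.const_mul hf.1 c, by rw [integral_const_mul, hf.2]⟩

lemma sub (hf : HasIntegralIoi f A) (hg : HasIntegralIoi g B) :
    HasIntegralIoi (fun v => f v - g v) (A - B) :=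
  ⟨hf.1.sub hg.1, by rw [integral_sub hf.1 hg.1, hf.2, hg.2]⟩

lemma comp_inv (hf : HasIntegralIoi f A) : HasIntegralIoi (fun v => f v⁻¹ / v ^ 2) A := by
  have hjac : ∀ v, 0 < v → (|(-1 : ℝ)| * v ^ (-1 - 1 : ℝ)) • f (v ^ (-1 : ℝ)) = f v⁻¹ / v ^ 2 := by
    intro v hv
    have hpow : v ^ (-1 - 1 : ℝ) = (v ^ 2)⁻¹ := by
      rw [show (-1 - 1 : ℝ) = -(2 : ℕ) by norm_num, Real.rpow_neg hv.le, Real.rpow_natCast]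
    rw [hpow, Real.rpow_neg_one, abs_neg, abs_one, one_mul, smul_eq_mul, inv_mul_eq_div]
  have hneg : (-1 : ℝ) ≠ 0 := by norm_num
  exact congr ⟨(integrableOn_Ioi_comp_rpow_iff f hneg).2 hf.1,
    (integral_comp_rpow_Ioi f hneg).trans hf.2⟩ hjac

lemma of_hasSum {ι : Type*} [Countable ι] {F : ι → ℝ → ℝ} {a : ι → ℝ}
    (hF : ∀ i, HasIntegralIoi (F i) (a i)) (hF0 : ∀ i v, 0 < v → 0 ≤ F i v)
    (hFg : ∀ v, 0 < v → HasSum (fun i => F i v) (g v)) (ha : HasSum a A) :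
    HasIntegralIoi g A := by
  have ae_of_pos {p : ℝ → Prop} (h : ∀ v, 0 < v → p v) :
      ∀ᵐ v ∂volume.restrict (Set.Ioi (0 : ℝ)), p v :=
    (ae_restrict_iff' measurableSet_Ioi).2 (ae_of_all _ h)
  refine ⟨integrable_of_hasSum_of_nonneg (fun i => (hF i).1) (fun i => ae_of_pos (hF0 i))
    (ae_of_pos hFg) (by simpa only [(hF _).2] using ha.summable), ?_⟩
  have hnorm : ∀ i, ∫ v in Set.Ioi 0, ‖F i v‖ = a i := fun i =>
    (setIntegral_congr_fun measurableSet_Ioi fun v hv =>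
      Real.norm_of_nonneg (hF0 i v hv)).trans (hF i).2
  have hint := hasSum_integral_of_summable_integral_norm (fun i => (hF i).1)
    (by simpa only [hnorm] using ha.summable)
  simp only [(hF _).2] at hint
  exact (setIntegral_congr_fun measurableSet_Ioi fun v hv => (hFg v hv).tsum_eq.symm).trans
    (hint.unique ha)

end HasIntegralIoi

end Integration

section CauchySchlomilch

variable {p q : ℝ}

lemma abs_lt_sqrt_sq_add {c : ℝ} (hc : 0 < c) (y : ℝ) : |y| < √(y ^ 2 + c) := by
  rw [← Real.sqrt_sq_eq_abs]
  exact Real.sqrt_lt_sqrt (sq_nonneg y) (lt_add_of_pos_right _ hc)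

/-- The inverse of the Cauchy–Schlömilch substitution `y = p * v - q / v`, a bijection from `(0, ∞)`
onto `ℝ`. -/
noncomputable def schlomilchInv (p q y : ℝ) : ℝ := (y + √(y ^ 2 + 4 * p * q)) / (2 * p)

lemma schlomilchInv_pos (hp : 0 < p) (hq : 0 < q) (y : ℝ) : 0 < schlomilchInv p q y := by
  have hy := (abs_lt.1 (abs_lt_sqrt_sq_add (by positivity : 0 < 4 * p * q) y)).1
  exact div_pos (by linarith) (by positivity)

lemma mul_schlomilchInv_sub_div (hp : 0 < p) (hq : 0 < q) (y : ℝ) :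
    p * schlomilchInv p q y - q / schlomilchInv p q y = y := by
  have hpos := schlomilchInv_pos hp hq y
  have hsq := Real.sq_sqrt (by positivity : 0 ≤ y ^ 2 + 4 * p * q)
  have hquad : p * schlomilchInv p q y ^ 2 - q = y * schlomilchInv p q y := by
    unfold schlomilchInv
    generalize √(y ^ 2 + 4 * p * q) = s at hsq
    field_simp
    linear_combination hsq
  field_simp
  linear_combination hquad

lemma schlomilchInv_mul_sub_div (hp : 0 < p) (hq : 0 < q) {v : ℝ} (hv : 0 < v) :
    schlomilchInv p q (p * v - q / v) = v := by
  have hsq : (p * v - q / v) ^ 2 + 4 * p * q = (p * v + q / v) ^ 2 := by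
    field_simp
    ring
  rw [schlomilchInv, hsq, Real.sqrt_sq (by positivity)]
  field_simp
  ring

lemma image_schlomilchInv (hp : 0 < p) (hq : 0 < q) :
    schlomilchInv p q '' Set.univ = Set.Ioi 0 := by
  refine Set.Subset.antisymm ?_ fun v hv => ⟨_, trivial, schlomilchInv_mul_sub_div hp hq hv⟩
  rintro _ ⟨y, -, rfl⟩
  exact schlomilchInv_pos hp hq y

lemma hasDerivAt_schlomilchInv (hp : 0 < p) (hq : 0 < q) (y : ℝ) :
    HasDerivAt (schlomilchInv p q) ((1 + y / √(y ^ 2 + 4 * p * q)) / (2 * p)) y := by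
  have hne : y ^ 2 + 4 * p * q ≠ 0 := by positivity
  refine (((hasDerivAt_id y).add
    (((hasDerivAt_pow 2 y).add_const (4 * p * q)).sqrt hne)).div_const (2 * p)).congr_deriv ?_
  congr 2
  rw [Nat.cast_two, Nat.add_one_sub_one, pow_one, mul_div_mul_left _ _ two_ne_zero]

lemma integral_eq_zero_of_odd {g : ℝ → ℝ} (hg : ∀ y, g (-y) = -g y) : ∫ y, g y = 0 := by
  have h := integral_neg_eq_self g volume
  simp only [hg, integral_neg] at h
  linarith

-- The odd part of the Jacobian of `schlomilchInv` integrates to zero against the even `f`.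
theorem hasIntegralIoi_cauchySchlomilch {f : ℝ → ℝ} (hf : Integrable f)
    (heven : ∀ y, f (-y) = f y) (hp : 0 < p) (hq : 0 < q) :
    HasIntegralIoi (fun v => f (p * v - q / v)) ((∫ y, f y) / (2 * p)) := by
  set r : ℝ → ℝ := fun y => y / √(y ^ 2 + 4 * p * q) with hr
  have hr_abs : ∀ y, |r y| < 1 := fun y => by
    have h := abs_lt_sqrt_sq_add (by positivity : 0 < 4 * p * q) y
    rw [abs_div, abs_of_nonneg (Real.sqrt_nonneg _)]
    exact (div_lt_one ((abs_nonneg y).trans_lt h)).2 h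
  have hjac : ∀ y, |(1 + r y) / (2 * p)| •
      f (p * schlomilchInv p q y - q / schlomilchInv p q y)
        = f y * (1 / (2 * p)) + r y * f y * (1 / (2 * p)) := fun y => by
    have h := (abs_lt.1 (hr_abs y)).1
    rw [mul_schlomilchInv_sub_div hp hq, abs_of_pos (div_pos (by linarith) (by positivity)),
      smul_eq_mul]
    ring
  have hrf : Integrable fun y => r y * f y :=
    hf.bdd_mul (c := 1) (Measurable.aestronglyMeasurable (by fun_prop))
      (ae_of_all _ fun y => (hr_abs y).le)
  have hrf_zero : ∫ y, r y * f y = 0 := integral_eq_zero_of_odd fun y => by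
    simp only [hr, heven, neg_sq]
    ring
  have hinj : Set.InjOn (schlomilchInv p q) Set.univ := fun y _ z _ h => by
    rw [← mul_schlomilchInv_sub_div hp hq y, h, mul_schlomilchInv_sub_div hp hq]
  have hderiv : ∀ y ∈ Set.univ,
      HasDerivWithinAt (schlomilchInv p q) ((1 + r y) / (2 * p)) Set.univ y :=
    fun y _ => (hasDerivAt_schlomilchInv hp hq y).hasDerivWithinAt
  rw [HasIntegralIoi, ← image_schlomilchInv hp hq,
    integrableOn_image_iff_integrableOn_abs_deriv_smul MeasurableSet.univ hderiv hinj,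
    integral_image_eq_integral_abs_deriv_smul MeasurableSet.univ hderiv hinj]
  simp only [hjac, integrableOn_univ, Measure.restrict_univ]
  refine ⟨(hf.mul_const _).add (hrf.mul_const _), ?_⟩
  rw [integral_add (hf.mul_const _) (hrf.mul_const _), integral_mul_const, integral_mul_const,
    hrf_zero, zero_mul, add_zero, mul_one_div]

lemma hasIntegralIoi_exp_neg_sq_add_inv_sq {a b : ℝ} (ha : 0 < a) (hb : 0 < b) :
    HasIntegralIoi (fun v => Real.exp (-(a * v ^ 2 + b / v ^ 2)))
      (√(π / a) / 2 * Real.exp (-(2 * √(a * b)))) := by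
  have hgauss := hasIntegralIoi_cauchySchlomilch (f := fun y => Real.exp (-1 * y ^ 2))
    (integrable_exp_neg_mul_sq one_pos) (fun y => by rw [neg_sq])
    (Real.sqrt_pos.2 ha) (Real.sqrt_pos.2 hb)
  rw [integral_gaussian] at hgauss
  have hconst : Real.exp (-(2 * √(a * b))) * (√(π / 1) / (2 * √a))
      = √(π / a) / 2 * Real.exp (-(2 * √(a * b))) := by
    rw [div_one, Real.sqrt_div Real.pi_nonneg]
    field_simp
  rw [← hconst]
  refine (hgauss.const_mul (Real.exp (-(2 * √(a * b))))).congr fun v hv => ?_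
  rw [← Real.exp_add, Real.sqrt_mul ha.le]
  congr 1
  have ha2 := Real.sq_sqrt ha.le
  have hb2 := Real.sq_sqrt hb.le
  field_simp
  linear_combination -v ^ 4 * ha2 - hb2

lemma hasIntegralIoi_sq_div_quartic (hp : 0 < p) (hq : 0 < q) :
    HasIntegralIoi (fun v => v ^ 2 / (p ^ 2 * v ^ 4 + q ^ 2)) (π / (2 * p * √(2 * p * q))) := by
  have hc : 0 < √(2 * p * q) := by positivity
  have hc2 : √(2 * p * q) ^ 2 = 2 * p * q := Real.sq_sqrt (by positivity)
  have hint : Integrable fun y : ℝ => (1 + (y / √(2 * p * q)) ^ 2)⁻¹ :=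
    integrable_inv_one_add_sq.comp_div hc.ne'
  have hval : ∫ y : ℝ, (1 + (y / √(2 * p * q)) ^ 2)⁻¹ = √(2 * p * q) * π := by
    rw [Measure.integral_comp_div (fun y : ℝ => (1 + y ^ 2)⁻¹), integral_univ_inv_one_add_sq,
      abs_of_pos hc, smul_eq_mul]
  have hschl := hasIntegralIoi_cauchySchlomilch hint (fun y => by rw [neg_div, neg_sq]) hp hq
  rw [hval] at hschl
  have hconst : 1 / (2 * p * q) * (√(2 * p * q) * π / (2 * p)) = π / (2 * p * √(2 * p * q)) := by
    generalize √(2 * p * q) = c at hc hc2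
    field_simp
    linear_combination hc2
  rw [← hconst]
  refine (hschl.const_mul _).congr fun v hv => ?_
  rw [div_pow, hc2]
  have : 0 < 2 * p * q * v ^ 2 + (p * v ^ 2 - q) ^ 2 := by positivity
  have : 0 < p ^ 2 * v ^ 4 + q ^ 2 := by positivity
  field_simp
  ring

lemma hasIntegralIoi_one_div_quartic (hp : 0 < p) (hq : 0 < q) :
    HasIntegralIoi (fun v => 1 / (p ^ 2 * v ^ 4 + q ^ 2)) (π / (2 * q * √(2 * p * q))) := by
  rw [show 2 * p * q = 2 * q * p by ring]
  refine (hasIntegralIoi_sq_div_quartic hq hp).comp_inv.congr fun v hv => ?_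
  field_simp
  ring

end CauchySchlomilch

lemma hasIntegralIoi_pow_four_div_quartic_mul_quartic {a b c d : ℝ} (ha : 0 < a) (hb : 0 < b)
    (hc : 0 < c) (hd : 0 < d) (hne : a * d ≠ b * c) :
    HasIntegralIoi (fun v => v ^ 4 / ((a ^ 2 * v ^ 4 + b ^ 2) * (c ^ 2 * v ^ 4 + d ^ 2)))
      (π / (2 * √(2 * a * c) * (√(a * d) + √(b * c)) * (a * d + b * c))) := by
  have hdisc : a ^ 2 * d ^ 2 - b ^ 2 * c ^ 2 ≠ 0 := by
    rw [← mul_pow, ← mul_pow, sq_sub_sq]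
    exact mul_ne_zero (by positivity) (sub_ne_zero.2 hne)
  have hval : 1 / (a ^ 2 * d ^ 2 - b ^ 2 * c ^ 2) *
      (d ^ 2 * (π / (2 * d * √(2 * c * d))) - b ^ 2 * (π / (2 * b * √(2 * a * b))))
        = π / (2 * √(2 * a * c) * (√(a * d) + √(b * c)) * (a * d + b * c)) := by
    obtain ⟨α, hα, rfl⟩ : ∃ α, 0 < α ∧ α ^ 2 = a := ⟨√a, by positivity, Real.sq_sqrt ha.le⟩
    obtain ⟨β, hβ, rfl⟩ : ∃ β, 0 < β ∧ β ^ 2 = b := ⟨√b, by positivity, Real.sq_sqrt hb.le⟩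
    obtain ⟨γ, hγ, rfl⟩ : ∃ γ, 0 < γ ∧ γ ^ 2 = c := ⟨√c, by positivity, Real.sq_sqrt hc.le⟩
    obtain ⟨δ, hδ, rfl⟩ : ∃ δ, 0 < δ ∧ δ ^ 2 = d := ⟨√d, by positivity, Real.sq_sqrt hd.le⟩
    have sqrt_mul_sq : ∀ {u v : ℝ}, 0 < u → 0 < v → √(u ^ 2 * v ^ 2) = u * v := fun hu hv => by
      rw [← mul_pow, Real.sqrt_sq (by positivity)]
    simp only [mul_assoc (2 : ℝ), Real.sqrt_mul zero_le_two, sqrt_mul_sq, hα, hβ, hγ, hδ]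
    have hsub : (α * δ - β * γ) ≠ 0 := fun h => hne (by
      rw [← mul_pow, ← mul_pow, sub_eq_zero.1 h])
    have hfac : (α ^ 2) ^ 2 * (δ ^ 2) ^ 2 - (β ^ 2) ^ 2 * (γ ^ 2) ^ 2
        = (α * δ - β * γ) * (α * δ + β * γ) * (α ^ 2 * δ ^ 2 + β ^ 2 * γ ^ 2) := by ring
    rw [hfac]
    field_simp
  rw [← hval]
  refine ((((hasIntegralIoi_one_div_quartic hc hd).const_mul (d ^ 2)).sub
    ((hasIntegralIoi_one_div_quartic ha hb).const_mul (b ^ 2))).const_mul _).congr fun v hv => ?_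
  field_simp
  ring

section Gaussian

variable {a b : ℝ}

lemma hasIntegralIoi_exp_neg_mul_sq (ha : 0 < a) :
    HasIntegralIoi (fun v => Real.exp (-a * v ^ 2)) (√(π / a) / 2) :=
  ⟨(integrable_exp_neg_mul_sq ha).integrableOn, integral_gaussian_Ioi a⟩

lemma hasIntegralIoi_sq_mul_exp_neg_mul_sq (ha : 0 < a) :
    HasIntegralIoi (fun v => v ^ 2 * Real.exp (-a * v ^ 2)) (√(π / a) / (4 * a)) := by
  have hcongr : ∀ v : ℝ, v ^ (2 : ℝ) * Real.exp (-a * v ^ (2 : ℝ))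
      = v ^ 2 * Real.exp (-a * v ^ 2) := fun v => by rw [Real.rpow_two]
  have hint := integrableOn_rpow_mul_exp_neg_mul_rpow (p := 2) (s := 2) (by norm_num)
    (by norm_num) ha
  have hval := _root_.integral_rpow_mul_exp_neg_mul_rpow (p := 2) (q := 2) (by norm_num)
    (by norm_num) ha
  simp only [hcongr] at hint hval
  refine ⟨hint, hval.trans ?_⟩
  rw [neg_div, show ((2 : ℝ) + 1) / 2 = 1 / 2 + 1 by norm_num, Real.Gamma_add_one (by norm_num),
    Real.Gamma_one_half_eq, Real.rpow_neg ha.le, Real.rpow_add ha, Real.rpow_one,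
    ← Real.sqrt_eq_rpow, Real.sqrt_div Real.pi_nonneg]
  field_simp
  norm_num

lemma integral_exp_neg_mul_sq_param (a b : ℝ) {v : ℝ} (hv : v ≠ 0) :
    ∫ c in a..b, Real.exp (-c * v ^ 2)
      = (Real.exp (-a * v ^ 2) - Real.exp (-b * v ^ 2)) / v ^ 2 := by
  have hderiv : ∀ c ∈ Set.uIcc a b, HasDerivAt (fun c => -(Real.exp (-c * v ^ 2) / v ^ 2))
      (Real.exp (-c * v ^ 2)) c := fun c _ => by
    refine ((((hasDerivAt_neg c).mul_const (v ^ 2)).exp.div_const (v ^ 2)).neg).congr_deriv ?_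
    field_simp
  rw [intervalIntegral.integral_eq_sub_of_hasDerivAt hderiv
    (Continuous.intervalIntegrable (by fun_prop) _ _)]
  ring

-- The integrand is `∫ c in a..b, exp (-c v²)`; exchange the order of integration.
lemma hasIntegralIoi_exp_neg_sub_exp_neg_div_sq (ha : 0 ≤ a) (hab : a ≤ b) :
    HasIntegralIoi (fun v => (Real.exp (-a * v ^ 2) - Real.exp (-b * v ^ 2)) / v ^ 2)
      (√π * (√b - √a)) := by
  have hinner : ∀ c ∈ Set.Ioc a b,
      ∫ v in Set.Ioi 0, Real.exp (-c * v ^ 2) = √π / 2 * c ^ (-1 / 2 : ℝ) := fun c hc => by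
    rw [(hasIntegralIoi_exp_neg_mul_sq (ha.trans_lt hc.1)).2, Real.sqrt_div Real.pi_nonneg,
      neg_div, Real.rpow_neg (ha.trans hc.1.le), ← Real.sqrt_eq_rpow]
    ring
  have hpow : IntegrableOn (fun c : ℝ => √π / 2 * c ^ (-1 / 2 : ℝ)) (Set.Ioc a b) :=
    ((intervalIntegral.intervalIntegrable_rpow' (by norm_num)).const_mul _).1
  have hprod : Integrable (fun z : ℝ × ℝ => Real.exp (-z.2 * z.1 ^ 2))
      ((volume.restrict (Set.Ioi 0)).prod (volume.restrict (Set.Ioc a b))) := by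
    refine (integrable_prod_iff' (Continuous.aestronglyMeasurable (by fun_prop))).2 ⟨?_, ?_⟩
    · filter_upwards [ae_restrict_mem measurableSet_Ioc] with c hc
      exact (hasIntegralIoi_exp_neg_mul_sq (ha.trans_lt hc.1)).1
    · simp only [Real.norm_of_nonneg (Real.exp_nonneg _)]
      exact hpow.congr_fun (fun c hc => (hinner c hc).symm) measurableSet_Ioc
  have hswap : ∫ v in Set.Ioi 0, ∫ c in Set.Ioc a b, Real.exp (-c * v ^ 2) = √π * (√b - √a) := by
    rw [integral_integral_swap hprod, setIntegral_congr_fun measurableSet_Ioc hinner,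
      ← intervalIntegral.integral_of_le hab, intervalIntegral.integral_const_mul,
      integral_rpow (Or.inl (by norm_num)), Real.sqrt_eq_rpow b, Real.sqrt_eq_rpow a]
    norm_num
    ring
  refine HasIntegralIoi.congr ⟨hprod.integral_prod_left, hswap⟩ fun v hv => ?_
  rw [← integral_exp_neg_mul_sq_param a b hv.ne', intervalIntegral.integral_of_le hab]

end Gaussian

section Bose

/-- The Bose–Einstein kernel `1 / (e ^ (2πt) - 1)`. -/
noncomputable def bose (t : ℝ) : ℝ := 1 / (Real.exp (2 * π * t) - 1)

/-- The Bose–Einstein kernel minus the first two terms `1 / (2πt) - 1 / 2` of its Laurent expansion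
at `0`. -/
noncomputable def boseRem (t : ℝ) : ℝ := bose t - 1 / (2 * π * t) + 1 / 2

variable {t : ℝ}

lemma hasSum_bose (ht : 0 < t) :
    HasSum (fun n : ℕ+ => Real.exp (-(2 * π * n * t))) (bose t) := by
  have hr : Real.exp (-(2 * π * t)) < 1 :=
    Real.exp_lt_one_iff.2 (neg_lt_zero.2 (by positivity))
  have hgeom := (hasSum_geometric_of_lt_one (Real.exp_nonneg _) hr).mul_right
    (Real.exp (-(2 * π * t)))
  have hval : (1 - Real.exp (-(2 * π * t)))⁻¹ * Real.exp (-(2 * π * t)) = bose t := by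
    rw [bose, inv_mul_eq_div, one_div, ← inv_div, sub_div, div_self (Real.exp_ne_zero _),
      one_div, ← Real.exp_neg, neg_neg]
  rw [← hval]
  refine (hasSum_pnat_iff_hasSum_succ (f := fun n : ℕ => Real.exp (-(2 * π * n * t)))).2
    (hgeom.congr_fun fun n => ?_)
  rw [← Real.exp_nat_mul, ← Real.exp_add]
  congr 1
  push_cast
  ring

lemma cot_pi_mul_I_mul (ht : t ≠ 0) : cot (π * (I * t)) = -I * (1 + 2 * bose t) := by
  have hexp : cexp (2 * π * I * (I * t)) = (cexp (2 * π * t))⁻¹ := by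
    rw [← Complex.exp_neg]
    congr 1
    linear_combination 2 * π * t * I_sq
  have hne : cexp (2 * π * t) - 1 ≠ 0 := by
    have : Real.exp (2 * π * t) - 1 ≠ 0 := by
      rw [sub_ne_zero, Ne, Real.exp_eq_one_iff]
      exact mul_ne_zero Real.two_pi_pos.ne' ht
    exact_mod_cast this
  rw [Complex.cot_pi_eq_exp_ratio, hexp, bose]
  push_cast
  have := Complex.exp_ne_zero (2 * π * t)
  field_simp
  rw [I_sq]
  ring

lemma one_div_I_mul_sub_add_one_div_I_mul_add (ht : 0 < t) (m : ℝ) :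
    1 / (I * t - m) + 1 / (I * t + m) = -2 * π * I * (t / π * (1 / (t ^ 2 + m ^ 2)) : ℝ) := by
  have hpos : 0 < t ^ 2 + m ^ 2 := by positivity
  have hne : (t : ℂ) ^ 2 + m ^ 2 ≠ 0 := by exact_mod_cast hpos.ne'
  have hfactor : (I * t - m) * (I * t + m) = -((t : ℂ) ^ 2 + m ^ 2) := by
    linear_combination (t : ℂ) ^ 2 * I_sq
  have hfactor_ne := hfactor.trans_ne (neg_ne_zero.2 hne)
  rw [div_add_div _ _ (left_ne_zero_of_mul hfactor_ne) (right_ne_zero_of_mul hfactor_ne), hfactor]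
  have := ofReal_ne_zero.2 Real.pi_ne_zero
  push_cast
  field_simp
  ring

-- The partial fraction expansion of the cotangent, on the imaginary axis.
lemma hasSum_boseRem (ht : 0 < t) :
    HasSum (fun n : ℕ+ => t / π * (1 / (t ^ 2 + n ^ 2))) (boseRem t) := by
  have hz : I * t ∈ integerComplement := by
    rintro ⟨m, hm⟩
    have := congrArg im hm
    simp only [intCast_im, mul_im, I_re, I_im, ofReal_re, ofReal_im] at this
    linarith
  have hsum : Summable fun n : ℕ+ => t / π * (1 / (t ^ 2 + (n : ℝ) ^ 2)) := by
    refine Summable.mul_left _ (Summable.of_nonneg_of_le (fun n => by positivity) (fun n => ?_)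
      (summable_pnat_iff_summable_nat.2 (Real.summable_one_div_nat_pow.2 one_lt_two)))
    exact one_div_le_one_div_of_le (by positivity) (le_add_of_nonneg_left (sq_nonneg t))
  have hterm : ∀ n : ℕ+, 1 / (I * t - n) + 1 / (I * t + n)
      = -2 * π * I * ((t / π * (1 / (t ^ 2 + n ^ 2)) : ℝ) : ℂ) := fun n => by
    exact_mod_cast one_div_I_mul_sub_add_one_div_I_mul_add ht n
  have hcot := cot_series_rep hz
  rw [cot_pi_mul_I_mul ht.ne', tsum_congr hterm, tsum_mul_left, ← ofReal_tsum] at hcot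
  have hval : ∑' n : ℕ+, t / π * (1 / (t ^ 2 + (n : ℝ) ^ 2)) = boseRem t := by
    generalize ∑' n : ℕ+, t / π * (1 / (t ^ 2 + (n : ℝ) ^ 2)) = S at hcot
    have hreal : π * t * (1 + 2 * bose t) = 1 + 2 * π * t * S := by
      have hinv : I * t * (1 / (I * t)) = 1 :=
        mul_one_div_cancel (mul_ne_zero I_ne_zero (ofReal_ne_zero.2 ht.ne'))
      refine ofReal_injective ?_
      push_cast
      linear_combination I * t * hcot + hinv + (π * t * (1 + 2 * bose t) - 2 * π * t * S) * I_sq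
    rw [boseRem]
    field_simp
    linear_combination -hreal
  exact hval ▸ hsum.hasSum

end Bose

section RightHalfPlane

lemma isOpen_re_pos : IsOpen {z : ℂ | 0 < z.re} := isOpen_lt continuous_const continuous_re

lemma differentiableOn_tsum_re_pos {ι : Type*} {F : ι → ℂ → ℂ}
    (hF : ∀ i, DifferentiableOn ℂ (F i) {z | 0 < z.re})
    (hbound : ∀ δ > 0, ∀ R, ∃ u : ι → ℝ, Summable u ∧
      ∀ i z, δ ≤ z.re → ‖z‖ ≤ R → ‖F i z‖ ≤ u i) :
    DifferentiableOn ℂ (fun z => ∑' i, F i z) {z | 0 < z.re} := by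
  intro w hw
  obtain ⟨u, hu, hFu⟩ := hbound (w.re / 2) (half_pos hw) (‖w‖ + 1)
  set U : Set ℂ := {z | w.re / 2 < z.re} ∩ {z | ‖z‖ < ‖w‖ + 1}
  have hU : IsOpen U :=
    (isOpen_lt continuous_const continuous_re).inter (isOpen_lt continuous_norm continuous_const)
  have hwU : w ∈ U := ⟨show w.re / 2 < w.re from half_lt_self hw, lt_add_one ‖w‖⟩
  have hUpos : U ⊆ {z | 0 < z.re} := fun z hz =>
    show 0 < z.re from (half_pos (show 0 < w.re from hw)).trans hz.1
  exact ((differentiableOn_tsum_of_summable_norm hu (fun i => (hF i).mono hUpos) hU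
    fun i z hz => hFu i z hz.1.le hz.2.le).differentiableAt
      (hU.mem_nhds hwU)).differentiableWithinAt

lemma eqOn_re_pos_of_eventuallyEq_ofReal {f g : ℂ → ℂ} {t : ℝ}
    (hf : DifferentiableOn ℂ f {z | 0 < z.re}) (hg : DifferentiableOn ℂ g {z | 0 < z.re})
    (ht : 0 < t) (hfg : ∀ᶠ r : ℝ in 𝓝 t, f r = g r) : Set.EqOn f g {z | 0 < z.re} := by
  refine (hf.analyticOnNhd isOpen_re_pos).eqOn_of_preconnected_of_frequently_eq
    (hg.analyticOnNhd isOpen_re_pos) (convex_halfSpace_re_gt 0).isPreconnected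
    (z₀ := (t : ℂ)) (ofReal_re t ▸ ht) ?_
  have hmap : Tendsto ((↑) : ℝ → ℂ) (𝓝[≠] t) (𝓝[≠] (t : ℂ)) :=
    continuous_ofReal.continuousWithinAt.tendsto_nhdsWithin fun r hr => by
      simpa only [Set.mem_compl_iff, Set.mem_singleton_iff, ofReal_inj] using hr
  exact hmap.frequently (hfg.filter_mono nhdsWithin_le_nhds).frequently

end RightHalfPlane

section Zeta

variable {s : ℂ}

lemma hasDerivAt_ofReal_cpow (s : ℂ) {y : ℝ} (hy : 0 < y) :
    HasDerivAt (fun y : ℝ => (y : ℂ) ^ s) (s * (y : ℂ) ^ (s - 1)) y := by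
  have h := ((hasDerivAt_id (y : ℂ)).cpow_const (c := s) (Or.inl hy)).comp_ofReal
  simpa only [mul_one, id] using h

lemma norm_cpow_neg_sub_cpow_neg_le (hs : -1 ≤ s.re) {a b : ℝ} (ha : 0 < a) (hab : a ≤ b) :
    ‖(b : ℂ) ^ (-s) - (a : ℂ) ^ (-s)‖ ≤ ‖s‖ * a ^ (-s.re - 1) * (b - a) := by
  refine norm_image_sub_le_of_norm_deriv_le_segment'
    (f := fun y : ℝ => (y : ℂ) ^ (-s)) (f' := fun y => -s * (y : ℂ) ^ (-s - 1))
    (fun y hy => (hasDerivAt_ofReal_cpow (-s) (ha.trans_le hy.1)).hasDerivWithinAt)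
    (fun y hy => ?_) b (Set.right_mem_Icc.2 hab)
  rw [norm_mul, norm_neg, norm_cpow_eq_rpow_re_of_pos (ha.trans_le hy.1), sub_re, neg_re, one_re]
  exact mul_le_mul_of_nonneg_left
    (Real.rpow_le_rpow_of_nonpos ha hy.1 (by linarith)) (norm_nonneg s)

/-- The integral of `(1 - s) * (y ^ (-s) - (n + 2) ^ (-s))` over `n + 1 ≤ y ≤ n + 2`. Summing over
`n` gives a series for `(s - 1) * ζ(s)` that converges on the half-plane `0 < re s`. -/
noncomputable def zetaTerm (n : ℕ) (s : ℂ) : ℂ :=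
  (s - 1) * (n + 2 : ℂ) ^ (-s) + ((n + 2 : ℂ) ^ (1 - s) - (n + 1 : ℂ) ^ (1 - s))

lemma norm_zetaTerm_le (n : ℕ) (hs : -1 ≤ s.re) :
    ‖zetaTerm n s‖ ≤ ‖1 - s‖ * ‖s‖ * ((n : ℝ) + 1) ^ (-s.re - 1) := by
  have hn : (0 : ℝ) < n + 1 := n.cast_add_one_pos
  have hmvt := norm_image_sub_le_of_norm_deriv_le_segment'
    (f := fun y : ℝ => (y : ℂ) ^ (1 - s) - (1 - s) * ((n : ℝ) + 2 : ℝ) ^ (-s) * y)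
    (f' := fun y => (1 - s) * (y : ℂ) ^ (-s) - (1 - s) * ((n : ℝ) + 2 : ℝ) ^ (-s))
    (a := n + 1) (b := n + 2) (C := ‖1 - s‖ * ‖s‖ * ((n : ℝ) + 1) ^ (-s.re - 1))
    (fun y hy => ?_) (fun y hy => ?_) _ (Set.right_mem_Icc.2 (by linarith))
  · convert hmvt using 1
    · rw [zetaTerm]
      push_cast
      ring_nf
    · ring
  · have hpow := hasDerivAt_ofReal_cpow (1 - s) (hn.trans_le hy.1)
    rw [sub_sub_cancel_left] at hpow
    have hlin := ((hasDerivAt_id (y : ℂ)).comp_ofReal.const_mul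
      ((1 - s) * ((n : ℝ) + 2 : ℝ) ^ (-s)))
    rw [mul_one] at hlin
    exact (hpow.sub hlin).hasDerivWithinAt
  · have hy0 : 0 < y := hn.trans_le hy.1
    rw [← mul_sub, norm_mul, mul_assoc, norm_sub_rev ((y : ℂ) ^ (-s))]
    gcongr
    refine (norm_cpow_neg_sub_cpow_neg_le hs hy0 hy.2.le).trans ?_
    rw [mul_assoc]
    gcongr
    calc y ^ (-s.re - 1) * ((n : ℝ) + 2 - y) ≤ ((n : ℝ) + 1) ^ (-s.re - 1) * 1 :=
          mul_le_mul (Real.rpow_le_rpow_of_nonpos hn hy.1 (by linarith)) (by linarith [hy.1])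
            (by linarith [hy.2]) (by positivity)
      _ = ((n : ℝ) + 1) ^ (-s.re - 1) := mul_one _

lemma summable_nat_add_one_rpow_neg_sub_one {δ : ℝ} (hδ : 0 < δ) :
    Summable fun n : ℕ => ((n : ℝ) + 1) ^ (-δ - 1) := by
  have h := (summable_nat_add_iff 1).2 (Real.summable_nat_rpow.2 (by linarith : -δ - 1 < -1))
  exact_mod_cast h

lemma summable_zetaTerm (hs : 0 < s.re) : Summable fun n => zetaTerm n s :=
  .of_norm_bounded ((summable_nat_add_one_rpow_neg_sub_one hs).mul_left _)
    fun n => norm_zetaTerm_le n (by linarith)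

lemma differentiableOn_tsum_zetaTerm :
    DifferentiableOn ℂ (fun s => ∑' n, zetaTerm n s) {s | 0 < s.re} := by
  refine differentiableOn_tsum_re_pos (fun n => ?_) fun δ hδ R =>
    ⟨_, (summable_nat_add_one_rpow_neg_sub_one hδ).mul_left ((1 + R) * R), fun n s hδs hsR => ?_⟩
  · have h1 : (n + 1 : ℂ) ≠ 0 := n.cast_add_one_ne_zero
    have h2 : (n + 2 : ℂ) ≠ 0 := by exact_mod_cast (Nat.succ_ne_zero (n + 1))
    have hpow : ∀ {c : ℂ} {f : ℂ → ℂ}, c ≠ 0 → Differentiable ℂ f →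
        Differentiable ℂ fun s => c ^ f s := fun hc hf => hf.const_cpow (Or.inl hc)
    exact (((differentiable_id.sub_const 1).mul (hpow h2 differentiable_id.neg)).add
      ((hpow h2 (differentiable_id.const_sub 1)).sub
        (hpow h1 (differentiable_id.const_sub 1)))).differentiableOn
  · have hR : 0 ≤ R := (norm_nonneg s).trans hsR
    refine (norm_zetaTerm_le n (by linarith)).trans ?_
    have hone : ‖1 - s‖ ≤ 1 + R :=
      (norm_sub_le _ _).trans (by rw [norm_one]; linarith)
    gcongr
    linarith [n.cast_nonneg (α := ℝ)]

lemma sum_range_zetaTerm (N : ℕ) : ∑ n ∈ range N, zetaTerm n s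
    = (s - 1) * ∑ n ∈ range N, (n + 2 : ℂ) ^ (-s) + ((N + 1 : ℂ) ^ (1 - s) - 1) := by
  have htel := sum_range_sub (fun n : ℕ => (n + 1 : ℂ) ^ (1 - s)) N
  simp only [Nat.cast_add, Nat.cast_one, Nat.cast_zero, zero_add, one_cpow, add_assoc,
    one_add_one_eq_two] at htel
  simp only [zetaTerm, sum_add_distrib, ← mul_sum, htel]

lemma hasSum_nat_add_two_cpow_neg (hs : 1 < s.re) :
    HasSum (fun n : ℕ => (n + 2 : ℂ) ^ (-s)) (riemannZeta s - 1) := by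
  have hsum : Summable fun n : ℕ => (n : ℂ) ^ (-s) := by
    simpa only [cpow_neg, one_div] using summable_one_div_nat_cpow.2 hs
  have hzero : (0 : ℂ) ^ (-s) = 0 :=
    zero_cpow (neg_ne_zero.2 fun h => by rw [h, zero_re] at hs; linarith)
  have hzeta : ∑' n : ℕ, (n : ℂ) ^ (-s) = riemannZeta s := by
    rw [zeta_eq_tsum_one_div_nat_cpow hs]
    simp only [cpow_neg, one_div]
  simpa only [sum_range_succ, sum_range_zero, Nat.cast_zero, Nat.cast_one, hzero, one_cpow,
    zero_add, hzeta, Nat.cast_add, Nat.cast_ofNat] using (hasSum_nat_add_iff' 2).2 hsum.hasSum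

lemma tendsto_nat_add_one_cpow_one_sub (hs : 1 < s.re) :
    Tendsto (fun N : ℕ => (N + 1 : ℂ) ^ (1 - s)) atTop (𝓝 0) := by
  refine tendsto_zero_iff_norm_tendsto_zero.2 ?_
  have hnorm : ∀ N : ℕ, ‖(N + 1 : ℂ) ^ (1 - s)‖ = ((N + 1 : ℕ) : ℝ) ^ (-(s.re - 1)) := fun N => by
    rw [← Nat.cast_add_one, norm_natCast_cpow_of_pos N.succ_pos, sub_re, one_re, neg_sub]
  simp only [hnorm]
  exact ((tendsto_rpow_neg_atTop (by linarith)).comp tendsto_natCast_atTop_atTop).comp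
    (tendsto_add_atTop_nat 1)

lemma tsum_zetaTerm_of_one_lt_re (hs : 1 < s.re) :
    ∑' n, zetaTerm n s = (s - 1) * riemannZeta s - s := by
  refine tendsto_nhds_unique
    (summable_zetaTerm (zero_lt_one.trans hs)).hasSum.tendsto_sum_nat ?_
  simp only [sum_range_zetaTerm]
  convert ((hasSum_nat_add_two_cpow_neg hs).tendsto_sum_nat.const_mul (s - 1)).add
    ((tendsto_nat_add_one_cpow_one_sub hs).sub_const 1) using 2
  ring

theorem hasSum_zetaTerm (hs : 0 < s.re) :
    HasSum (fun n => zetaTerm n s) (riemannZeta₁ s - s) := by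
  have heq : Set.EqOn (fun s => ∑' n, zetaTerm n s) (fun s => riemannZeta₁ s - s)
      {s | 0 < s.re} := by
    refine eqOn_re_pos_of_eventuallyEq_ofReal differentiableOn_tsum_zetaTerm
      (differentiable_riemannZeta₁.sub differentiable_id).differentiableOn two_pos ?_
    filter_upwards [lt_mem_nhds one_lt_two] with r hr
    have hr1 : (r : ℂ) ≠ 1 := ofReal_ne_one.2 hr.ne'
    rw [tsum_zetaTerm_of_one_lt_re (by rwa [ofReal_re]), riemannZeta_eq_inv_sub_mul hr1,
      mul_inv_cancel_left₀ (sub_ne_zero.2 hr1)]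
  exact (summable_zetaTerm hs).hasSum_iff.2 (heq hs)

end Zeta

section ZetaValues

lemma ofReal_re_riemannZeta_ofReal (r : ℝ) : ((riemannZeta r).re : ℂ) = riemannZeta r :=
  conj_eq_iff_re.1 (by rw [← riemannZeta_conj, conj_ofReal])

lemma ofReal_re_riemannZeta_half : ((riemannZeta (1 / 2)).re : ℂ) = riemannZeta (1 / 2) := by
  simpa only [ofReal_div, ofReal_one, ofReal_ofNat] using ofReal_re_riemannZeta_ofReal (1 / 2)

lemma ofReal_re_riemannZeta_three_half :
    ((riemannZeta (3 / 2)).re : ℂ) = riemannZeta (3 / 2) := by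
  simpa only [ofReal_div, ofReal_ofNat] using ofReal_re_riemannZeta_ofReal (3 / 2)

lemma ofReal_sqrt_eq_cpow {y : ℝ} (hy : 0 ≤ y) : ((√y : ℝ) : ℂ) = (y : ℂ) ^ (1 / 2 : ℂ) := by
  rw [Real.sqrt_eq_rpow, ofReal_cpow hy]
  push_cast
  rfl

lemma zetaTerm_half (n : ℕ) :
    zetaTerm n (1 / 2) = ((√(n + 2) - √(n + 1) - 1 / (2 * √(n + 2)) : ℝ) : ℂ) := by
  have h1 := ofReal_sqrt_eq_cpow (by positivity : (0 : ℝ) ≤ n + 1)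
  have h2 := ofReal_sqrt_eq_cpow (by positivity : (0 : ℝ) ≤ n + 2)
  push_cast at h1 h2
  rw [zetaTerm, show (1 - 1 / 2 : ℂ) = 1 / 2 by norm_num, cpow_neg, ← h1, ← h2]
  push_cast
  ring

theorem hasSum_riemannZeta_half :
    HasSum (fun n : ℕ => 1 / √(n + 1) - 2 * (√(n + 1) - √n)) (riemannZeta (1 / 2)).re := by
  have hζ := hasSum_zetaTerm (s := 1 / 2) (by norm_num)
  have hζ₁ : riemannZeta₁ (1 / 2) - 1 / 2
      = ((-((riemannZeta (1 / 2)).re + 1) / 2 : ℝ) : ℂ) := by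
    push_cast
    rw [ofReal_re_riemannZeta_half, riemannZeta_eq_inv_sub_mul (by norm_num)]
    ring
  simp only [zetaTerm_half, hζ₁, hasSum_ofReal] at hζ
  set f : ℕ → ℝ := fun n => 1 / √(n + 1) - 2 * (√(n + 1) - √n) with hf
  have hf0 : ∑ i ∈ range 1, f i = -1 := by norm_num [hf]
  have hshift : HasSum (fun n => f (n + 1)) ((riemannZeta (1 / 2)).re + 1) := by
    rw [show (riemannZeta (1 / 2)).re + 1 = -2 * (-((riemannZeta (1 / 2)).re + 1) / 2) by ring]
    refine (hζ.mul_left (-2)).congr_fun fun n => ?_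
    simp only [hf, Nat.cast_add_one, add_assoc, one_add_one_eq_two]
    ring
  simpa only [hf0, add_neg_cancel_right] using (hasSum_nat_add_iff 1).1 hshift

theorem hasSum_riemannZeta_three_half :
    HasSum (fun n : ℕ+ => 1 / √(n : ℝ) ^ 3) (riemannZeta (3 / 2)).re := by
  have hterm : ∀ n : ℕ, ((1 / √((n + 1 : ℕ) : ℝ) ^ 3 : ℝ) : ℂ) = 1 / (n + 1 : ℂ) ^ (3 / 2 : ℂ) := by
    intro n
    push_cast
    rw [ofReal_sqrt_eq_cpow (by positivity), ← cpow_nat_mul]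
    push_cast
    norm_num
  refine (hasSum_pnat_iff_hasSum_succ (f := fun n : ℕ => 1 / √(n : ℝ) ^ 3)).2 ?_
  rw [← hasSum_ofReal, ofReal_re_riemannZeta_three_half,
    zeta_eq_tsum_one_div_nat_add_one_cpow (by norm_num)]
  simp only [hterm]
  have hs : Summable fun n : ℕ => 1 / (n : ℂ) ^ (3 / 2 : ℂ) :=
    summable_one_div_nat_cpow.2 (by norm_num)
  exact_mod_cast ((summable_nat_add_iff 1).2 hs).hasSum

lemma riemannZeta_neg_half : riemannZeta (-1 / 2) = -(riemannZeta (3 / 2) / (4 * π)) := by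
  have hpole : ∀ n : ℕ, (3 / 2 : ℂ) ≠ -n := fun n hn => by
    have hre := congrArg Complex.re hn
    norm_num at hre
    linarith [n.cast_nonneg (α := ℝ)]
  have hfun := riemannZeta_one_sub hpole (by norm_num)
  have hGamma : Complex.Gamma (3 / 2) = ((√π / 2 : ℝ) : ℂ) := by
    rw [show (3 / 2 : ℂ) = 1 / 2 + 1 by norm_num, Complex.Gamma_add_one _ (by norm_num),
      Complex.Gamma_one_half_eq, ← ofReal_sqrt_eq_cpow Real.pi_pos.le]
    push_cast
    ring
  have hcos : Complex.cos (π * (3 / 2) / 2) = ((-(√2 / 2) : ℝ) : ℂ) := by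
    rw [← Real.cos_pi_div_four, ← Real.cos_pi_sub]
    push_cast
    congr 1
    ring
  have hpow : (2 * π : ℂ) ^ (-(3 / 2) : ℂ) = ((1 / (√2 * √π) ^ 3 : ℝ) : ℂ) := by
    push_cast
    rw [← ofReal_mul, ← Real.sqrt_mul two_pos.le, ofReal_sqrt_eq_cpow (by positivity),
      ← cpow_nat_mul, cpow_neg]
    push_cast
    norm_num
  have hconst : (2 * (1 / (√2 * √π) ^ 3) * (√π / 2) * -(√2 / 2) : ℝ) = -(1 / (4 * π)) := by
    have hfour : (4 : ℝ) * π = 2 * √2 ^ 2 * √π ^ 2 := by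
      rw [Real.sq_sqrt Real.pi_pos.le, Real.sq_sqrt two_pos.le]
      ring
    rw [hfour]
    field_simp
  rw [show (-1 / 2 : ℂ) = 1 - 3 / 2 by norm_num, hfun, hGamma, hcos, hpow]
  have hconst' := congrArg ((↑) : ℝ → ℂ) hconst
  push_cast at hconst' ⊢
  rw [hconst']
  ring

end ZetaValues

section DivisorSums

lemma rsigma_nonneg (r : ℝ) (n : ℕ) : 0 ≤ rsigma r n := sum_nonneg fun _ _ => by positivity

lemma rsigma_div_rpow (r : ℝ) {n : ℕ} (hn : n ≠ 0) :
    rsigma r n / (n : ℝ) ^ r = rsigma (-r) n := by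
  rw [rsigma, rsigma, sum_div, ← Nat.sum_div_divisors]
  refine sum_congr rfl fun d hd => ?_
  have hd0 : (d : ℝ) ≠ 0 := Nat.cast_ne_zero.2 (Nat.pos_of_mem_divisors hd).ne'
  have hn0 : (n : ℝ) ≠ 0 := Nat.cast_ne_zero.2 hn
  rw [Nat.cast_div (Nat.dvd_of_mem_divisors hd) hd0,
    ← Real.div_rpow (by positivity) (by positivity), div_div, mul_comm (d : ℝ), ← div_div,
    div_self hn0, one_div, Real.inv_rpow d.cast_nonneg, Real.rpow_neg d.cast_nonneg]

lemma hasSum_rsigma_mul {r A : ℝ} {f : ℕ → ℝ}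
    (h : HasSum (fun q : ℕ+ × ℕ+ => (q.1 : ℝ) ^ r * f (q.1 * q.2)) A) :
    HasSum (fun n : ℕ+ => rsigma r n * f n) A := by
  have hσ := (sigmaAntidiagonalEquivProd.hasSum_iff.2 h).sigma fun n => hasSum_fintype _
  refine hσ.congr_fun fun n => ?_
  have hfib : ∀ c : (n : ℕ).divisorsAntidiagonal,
      ((fun q : ℕ+ × ℕ+ => (q.1 : ℝ) ^ r * f (q.1 * q.2)) ∘ sigmaAntidiagonalEquivProd) ⟨n, c⟩
        = (c.1.1 : ℝ) ^ r * f (c.1.1 * c.1.2) := fun _ => rfl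
  simp only [hfib]
  rw [sum_coe_sort _ fun c : ℕ × ℕ => (c.1 : ℝ) ^ r * f (c.1 * c.2),
    Nat.sum_divisorsAntidiagonal fun i j => (i : ℝ) ^ r * f (i * j), rsigma, sum_mul]
  exact sum_congr rfl fun d hd => by rw [Nat.mul_div_cancel' (Nat.dvd_of_mem_divisors hd)]

lemma summable_pnat_rpow {p : ℝ} (hp : p < -1) : Summable fun n : ℕ+ => (n : ℝ) ^ p :=
  (Real.summable_nat_rpow.2 hp).comp_injective PNat.coe_injective

variable {r p C : ℝ} {f : ℕ → ℝ}

lemma summable_rpow_mul_comp_mul (hp : 1 < p) (hr : r < p - 1)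
    (hf : ∀ n : ℕ+, |f n| ≤ C * (n : ℝ) ^ (-p)) :
    Summable fun q : ℕ+ × ℕ+ => (q.1 : ℝ) ^ r * f (q.1 * q.2) := by
  have hprod := ((summable_pnat_rpow (by linarith : r - p < -1)).mul_of_nonneg
    (summable_pnat_rpow (by linarith : -p < -1)) (fun _ => by positivity)
    (fun _ => by positivity)).mul_left C
  refine .of_norm_bounded hprod fun q => ?_
  have hq : (0 : ℝ) < q.1 := Nat.cast_pos.2 q.1.pos
  calc ‖(q.1 : ℝ) ^ r * f (q.1 * q.2)‖ = (q.1 : ℝ) ^ r * |f (q.1 * q.2 : ℕ+)| := by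
        rw [norm_mul, Real.norm_of_nonneg (by positivity), Real.norm_eq_abs, PNat.mul_coe]
    _ ≤ (q.1 : ℝ) ^ r * (C * ((q.1 * q.2 : ℕ+) : ℝ) ^ (-p)) := by gcongr; exact hf _
    _ = C * ((q.1 : ℝ) ^ (r - p) * (q.2 : ℝ) ^ (-p)) := by
        rw [PNat.mul_coe, Nat.cast_mul, Real.mul_rpow (by positivity) (by positivity),
          sub_eq_add_neg, Real.rpow_add hq]
        ring

lemma hasSum_rpow_mul_comp_mul (hp : 1 < p) (hr : r < p - 1)
    (hf : ∀ n : ℕ+, |f n| ≤ C * (n : ℝ) ^ (-p)) :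
    HasSum (fun q : ℕ+ × ℕ+ => (q.1 : ℝ) ^ r * f (q.1 * q.2)) (∑' n : ℕ+, rsigma r n * f n) := by
  obtain ⟨A, hA⟩ := summable_rpow_mul_comp_mul hp hr hf
  rwa [(hasSum_rsigma_mul hA).tsum_eq]

lemma summable_rsigma_mul_rpow (hp : 1 < p) (hr : r < p - 1) :
    Summable fun n : ℕ+ => rsigma r n * (n : ℝ) ^ (-p) := by
  have hf : ∀ n : ℕ+, |((n : ℕ) : ℝ) ^ (-p)| ≤ 1 * (n : ℝ) ^ (-p) := fun n => by
    rw [one_mul, abs_of_nonneg (by positivity)]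
  exact (hasSum_rsigma_mul (f := fun n => (n : ℝ) ^ (-p))
    (hasSum_rpow_mul_comp_mul (f := fun n => (n : ℝ) ^ (-p)) hp hr hf)).summable

lemma norm_rsigma_mul_le {c : ℂ} {n : ℕ} (hc : ‖c‖ ≤ C * (n : ℝ) ^ (-p)) :
    ‖(rsigma r n : ℂ) * c‖ ≤ C * (rsigma r n * (n : ℝ) ^ (-p)) := by
  rw [norm_mul, norm_real, Real.norm_of_nonneg (rsigma_nonneg r n), mul_left_comm]
  exact mul_le_mul_of_nonneg_left hc (rsigma_nonneg r n)

lemma summable_rsigma_mul {c : ℕ+ → ℂ} (hp : 1 < p) (hr : r < p - 1)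
    (hc : ∀ n : ℕ+, ‖c n‖ ≤ C * (n : ℝ) ^ (-p)) : Summable fun n : ℕ+ => (rsigma r n : ℂ) * c n :=
  .of_norm_bounded ((summable_rsigma_mul_rpow hp hr).mul_left C) fun n => norm_rsigma_mul_le (hc n)

lemma differentiableOn_tsum_rsigma_mul {F : ℕ+ → ℂ → ℂ} (hp : 1 < p) (hr : r < p - 1)
    (hF : ∀ n, DifferentiableOn ℂ (F n) {z | 0 < z.re})
    (hbound : ∀ δ > 0, ∀ R, ∃ C, ∀ (n : ℕ+) (z : ℂ), δ ≤ z.re → ‖z‖ ≤ R →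
      ‖F n z‖ ≤ C * (n : ℝ) ^ (-p)) :
    DifferentiableOn ℂ (fun z => ∑' n : ℕ+, (rsigma r n : ℂ) * F n z) {z | 0 < z.re} := by
  refine differentiableOn_tsum_re_pos (fun n => (hF n).const_mul _) fun δ hδ R => ?_
  obtain ⟨C, hC⟩ := hbound δ hδ R
  exact ⟨_, (summable_rsigma_mul_rpow hp hr).mul_left C,
    fun n z hδz hzR => norm_rsigma_mul_le (hC n z hδz hzR)⟩

end DivisorSums

section BoseIntegrals

variable {s t : ℝ}

lemma sqrt_pow_three {y : ℝ} (hy : 0 ≤ y) : √y ^ 3 = y * √y := by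
  rw [pow_succ, Real.sq_sqrt hy]

lemma hasSum_one_div_sub_bose (ht : 0 < t) :
    HasSum (fun n : ℕ => (Real.exp (-(2 * π * n * t)) - Real.exp (-(2 * π * (n + 1 : ℕ) * t)))
      / (2 * π * t) - Real.exp (-(2 * π * (n + 1 : ℕ) * t))) (1 / (2 * π * t) - bose t) := by
  have hbose := (hasSum_pnat_iff_hasSum_succ (f := fun n : ℕ => Real.exp (-(2 * π * n * t)))).1
    (hasSum_bose ht)
  have hlt : Real.exp (-(2 * π * t)) < 1 :=
    Real.exp_lt_one_iff.2 (neg_lt_zero.2 (by positivity))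
  have htel := (hasSum_geometric_of_lt_one (Real.exp_nonneg _) hlt).mul_right
    (1 - Real.exp (-(2 * π * t)))
  rw [inv_mul_cancel₀ (sub_pos.2 hlt).ne'] at htel
  refine ((htel.div_const (2 * π * t)).sub hbose).congr_fun fun n => ?_
  congr 2
  rw [mul_sub, mul_one, ← pow_succ, ← Real.exp_nat_mul, ← Real.exp_nat_mul]
  congr 2 <;> ring

lemma exp_neg_add_le_sub_div {y z : ℝ} (hy : 0 < y) :
    Real.exp (-(z + y)) ≤ (Real.exp (-z) - Real.exp (-(z + y))) / y := by
  have hexp : Real.exp (-z) = Real.exp (-(z + y)) * Real.exp y := by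
    rw [← Real.exp_add]
    congr 1
    ring
  rw [le_div_iff₀ hy, hexp]
  nlinarith [Real.exp_pos (-(z + y)), Real.add_one_le_exp y]

lemma hasIntegralIoi_sq_mul_bose (hs : 0 < s) :
    HasIntegralIoi (fun v => v ^ 2 * bose (s * v ^ 2))
      ((riemannZeta (3 / 2)).re / (8 * π * s * √(2 * s))) := by
  refine .of_hasSum (fun n : ℕ+ => hasIntegralIoi_sq_mul_exp_neg_mul_sq
    (a := 2 * π * n * s) (by positivity)) (fun _ _ _ => by positivity) (fun v hv => ?_) ?_
  · refine ((hasSum_bose (by positivity : 0 < s * v ^ 2)).mul_left _).congr_fun fun n => ?_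
    ring_nf
  · refine (hasSum_riemannZeta_three_half.div_const _).congr_fun fun n => ?_
    rw [show π / (2 * π * n * s) = 1 / ((n : ℝ) * (2 * s)) by field_simp,
      Real.sqrt_div zero_le_one, Real.sqrt_one, Real.sqrt_mul (Nat.cast_nonneg _),
      sqrt_pow_three (Nat.cast_nonneg _)]
    field_simp
    norm_num

lemma hasIntegralIoi_exp_neg_sub_div_sub_exp_neg (hs : 0 < s) (n : ℕ) :
    HasIntegralIoi (fun v => (Real.exp (-(2 * π * n * (s * v ^ 2)))
        - Real.exp (-(2 * π * (n + 1 : ℕ) * (s * v ^ 2)))) / (2 * π * (s * v ^ 2))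
        - Real.exp (-(2 * π * (n + 1 : ℕ) * (s * v ^ 2))))
      (-(1 / √(n + 1) - 2 * (√(n + 1) - √n)) / (2 * √(2 * s))) := by
  have hsqrt : ∀ m : ℝ, √(2 * π * m * s) = √π * √(2 * s) * √m := fun m => by
    rw [← Real.sqrt_mul Real.pi_nonneg, ← Real.sqrt_mul (by positivity)]
    ring_nf
  have hπs : 2 * π * s = √π ^ 2 * √(2 * s) ^ 2 := by
    rw [Real.sq_sqrt Real.pi_nonneg, Real.sq_sqrt (by positivity)]
    ring
  have hval : 1 / (2 * π * s) * (√π * (√(2 * π * (n + 1 : ℕ) * s) - √(2 * π * n * s)))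
      - √(π / (2 * π * (n + 1 : ℕ) * s)) / 2
        = -(1 / √(n + 1) - 2 * (√(n + 1) - √n)) / (2 * √(2 * s)) := by
    rw [Real.sqrt_div Real.pi_nonneg, hsqrt, hsqrt, Nat.cast_add_one, hπs]
    field_simp
    ring
  rw [← hval]
  refine (((hasIntegralIoi_exp_neg_sub_exp_neg_div_sq (by positivity)
    (by gcongr; exact n.le_succ)).const_mul _).sub
      (hasIntegralIoi_exp_neg_mul_sq (by positivity))).congr fun v hv => ?_
  simp only [neg_mul, mul_assoc _ s (v ^ 2)]
  field_simp

lemma hasIntegralIoi_one_div_sub_bose (hs : 0 < s) :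
    HasIntegralIoi (fun v => 1 / (2 * π * (s * v ^ 2)) - bose (s * v ^ 2))
      (-(riemannZeta (1 / 2)).re / (2 * √(2 * s))) := by
  refine .of_hasSum (hasIntegralIoi_exp_neg_sub_div_sub_exp_neg hs) (fun n v hv => ?_)
    (fun v hv => hasSum_one_div_sub_bose (by positivity))
    (hasSum_riemannZeta_half.neg.div_const _)
  rw [sub_nonneg]
  convert exp_neg_add_le_sub_div (z := 2 * π * n * (s * v ^ 2))
    (by positivity : 0 < 2 * π * (s * v ^ 2)) using 3 <;> push_cast <;> ring_nf

lemma hasIntegralIoi_boseRem_div_sq (hs : 0 < s) :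
    HasIntegralIoi (fun v => boseRem (s / v ^ 2))
      (s * (riemannZeta (3 / 2)).re / (2 * √(2 * s))) := by
  refine .of_hasSum (fun n : ℕ+ => (hasIntegralIoi_sq_div_quartic (p := n) (q := s)
    (by positivity) hs).const_mul (s / π)) (fun _ _ _ => by positivity) (fun v hv => ?_) ?_
  · refine (hasSum_boseRem (by positivity : 0 < s / v ^ 2)).congr_fun fun n => ?_
    field_simp
    ring
  · refine ((hasSum_riemannZeta_three_half.mul_left s).div_const _).congr_fun fun n => ?_
    rw [show 2 * (n : ℝ) * s = n * (2 * s) by ring, Real.sqrt_mul (Nat.cast_nonneg _),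
      sqrt_pow_three (Nat.cast_nonneg _)]
    field_simp

lemma hasIntegralIoi_one_div_sub_bose_div_sq (hs : 0 < s) :
    HasIntegralIoi
      (fun v => 1 / (2 * π * (s * v ^ 2)) * (1 / (2 * π * (s / v ^ 2)) - bose (s / v ^ 2)))
      (1 / (2 * π * s) * (-(riemannZeta (1 / 2)).re / (2 * √(2 * s)))) := by
  refine ((hasIntegralIoi_one_div_sub_bose hs).comp_inv.const_mul _).congr fun v hv => ?_
  rw [inv_pow, ← div_eq_mul_inv]
  field_simp

lemma rpow_neg_half {y : ℝ} (hy : 0 ≤ y) : y ^ (-(1 / 2) : ℝ) = 1 / √y := by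
  rw [Real.rpow_neg hy, ← Real.sqrt_eq_rpow, one_div]

lemma rpow_neg_three_half {y : ℝ} (hy : 0 ≤ y) : y ^ (-(3 / 2) : ℝ) = 1 / √y ^ 3 := by
  rw [Real.rpow_neg hy, Real.sqrt_eq_rpow, ← Real.rpow_mul_natCast hy, one_div]
  norm_num

lemma exp_neg_mul_sqrt_le {y : ℝ} (hs : 0 < s) (hy : 0 < y) :
    Real.exp (-(s * √y)) ≤ 6 / s ^ 3 * y ^ (-(3 / 2) : ℝ) := by
  have h := Real.pow_div_factorial_le_exp (s * √y) (by positivity) 3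
  rw [rpow_neg_three_half hy.le, Real.exp_neg, div_mul_div_comm, mul_one, ← mul_pow,
    inv_le_comm₀ (Real.exp_pos _) (by positivity), inv_div]
  exact_mod_cast h

lemma hasIntegralIoi_bose_mul_bose (hs : 0 < s) :
    HasIntegralIoi (fun v => bose (s * v ^ 2) * bose (s / v ^ 2))
      (1 / (2 * √(2 * s)) *
        ∑' n : ℕ+, rsigma (-(1 / 2)) n * Real.exp (-(4 * π * s * √(n : ℝ)))) := by
  have hsum := hasSum_rpow_mul_comp_mul (r := -(1 / 2)) (p := 3 / 2)
    (f := fun n => Real.exp (-(4 * π * s * √(n : ℝ)))) (by norm_num) (by norm_num) fun n => by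
      rw [abs_of_nonneg (Real.exp_nonneg _)]
      exact exp_neg_mul_sqrt_le (by positivity) (Nat.cast_pos.2 n.pos)
  refine .of_hasSum (fun q : ℕ+ × ℕ+ => hasIntegralIoi_exp_neg_sq_add_inv_sq
    (a := 2 * π * q.1 * s) (b := 2 * π * q.2 * s) (by positivity) (by positivity))
    (fun _ _ _ => Real.exp_nonneg _) (fun v hv => ?_) ((hsum.mul_left _).congr_fun fun q => ?_)
  · have h1 := hasSum_bose (by positivity : 0 < s * v ^ 2)
    have h2 := hasSum_bose (by positivity : 0 < s / v ^ 2)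
    refine (h1.mul h2 (h1.summable.mul_of_nonneg h2.summable (fun _ => Real.exp_nonneg _)
      fun _ => Real.exp_nonneg _)).congr_fun fun q => ?_
    rw [← Real.exp_add]
    congr 1
    ring
  · have hq : (0 : ℝ) < q.1 := Nat.cast_pos.2 q.1.pos
    rw [show π / (2 * π * q.1 * s) = 1 / (q.1 * (2 * s)) by field_simp, Real.sqrt_div zero_le_one,
      Real.sqrt_one, Real.sqrt_mul hq.le, rpow_neg_half hq.le,
      show 2 * π * q.1 * s * (2 * π * q.2 * s) = (2 * π * s) ^ 2 * (q.1 * q.2) by ring,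
      Real.sqrt_mul (sq_nonneg (2 * π * s)), Real.sqrt_sq (by positivity), Nat.cast_mul,
      show 2 * (2 * π * s * √(q.1 * q.2 : ℝ)) = 4 * π * s * √(q.1 * q.2 : ℝ) by ring]
    field_simp

lemma one_div_add_sqrt_mul_le {y : ℝ} (hs : 0 < s) (hy : 0 < y) :
    1 / ((s + √y) * (s ^ 2 + y)) ≤ 1 * y ^ (-(3 / 2) : ℝ) := by
  rw [one_mul, rpow_neg_three_half hy.le, sqrt_pow_three hy.le]
  refine one_div_le_one_div_of_le (by positivity) ?_
  rw [mul_comm y]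
  gcongr <;> nlinarith

lemma hasIntegralIoi_boseRem_mul_boseRem (hs : 0 < s) (hs1 : s < 1) :
    HasIntegralIoi (fun v => boseRem (s * v ^ 2) * boseRem (s / v ^ 2))
      (s ^ 2 / (2 * π * √(2 * s)) *
        ∑' n : ℕ+, rsigma (-(1 / 2)) n * (1 / ((s + √(n : ℝ)) * (s ^ 2 + n)))) := by
  have hsum := hasSum_rpow_mul_comp_mul (r := -(1 / 2)) (p := 3 / 2)
    (f := fun n => 1 / ((s + √(n : ℝ)) * (s ^ 2 + n))) (by norm_num) (by norm_num) fun n => by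
      rw [abs_of_nonneg (by positivity)]
      exact one_div_add_sqrt_mul_le hs (Nat.cast_pos.2 n.pos)
  have hF : ∀ q : ℕ+ × ℕ+, HasIntegralIoi _ _ := fun q =>
    (hasIntegralIoi_pow_four_div_quartic_mul_quartic (a := s) (b := q.2) (c := q.1) (d := s)
      hs (by positivity) (by positivity) hs (by
        have h1 : (1 : ℝ) ≤ q.2 := Nat.one_le_cast.2 q.2.pos
        have h2 : (1 : ℝ) ≤ q.1 := Nat.one_le_cast.2 q.1.pos
        nlinarith)).const_mul (s ^ 2 / π ^ 2)
  refine .of_hasSum hF (fun _ _ _ => by positivity) (fun v hv => ?_)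
    ((hsum.mul_left _).congr_fun fun q => ?_)
  · have h1 := hasSum_boseRem (by positivity : 0 < s / v ^ 2)
    have h2 := hasSum_boseRem (by positivity : 0 < s * v ^ 2)
    rw [mul_comm (boseRem (s * v ^ 2))]
    refine (h1.mul h2 (h1.summable.mul_of_nonneg h2.summable (fun _ => by positivity)
      fun _ => by positivity)).congr_fun fun q => ?_
    field_simp
    ring
  · have hq : (0 : ℝ) < q.1 := Nat.cast_pos.2 q.1.pos
    rw [rpow_neg_half hq.le, mul_right_comm, mul_comm (2 * s), Real.sqrt_mul hq.le, Nat.cast_mul,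
      mul_comm (q.2 : ℝ), ← sq, Real.sqrt_sq hs.le]
    field_simp

lemma bose_mul_bose {v : ℝ} (hs : 0 < s) (hv : 0 < v) :
    bose (s * v ^ 2) * bose (s / v ^ 2) = boseRem (s * v ^ 2) * boseRem (s / v ^ 2)
      + 1 / 2 * (1 / (2 * π * (s * v ^ 2)) - bose (s * v ^ 2)) - 1 / 2 * boseRem (s / v ^ 2)
      + 1 / (2 * π * s) * (v ^ 2 * bose (s * v ^ 2))
      - 1 / (2 * π * (s * v ^ 2)) * (1 / (2 * π * (s / v ^ 2)) - bose (s / v ^ 2)) := by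
  rw [boseRem, boseRem]
  field_simp
  ring

theorem tsum_rsigma_mul_exp_neg_of_lt_one (hs : 0 < s) (hs1 : s < 1) :
    ∑' n : ℕ+, rsigma (-(1 / 2)) n * Real.exp (-(4 * π * s * √(n : ℝ)))
      = (1 / (2 * π * s) - 1 / 2) * (riemannZeta (1 / 2)).re - s / 2 * (riemannZeta (3 / 2)).re
        + (riemannZeta (3 / 2)).re / (8 * π ^ 2 * s ^ 2)
        + s ^ 2 / π *
          ∑' n : ℕ+, rsigma (-(1 / 2)) n * (1 / ((s + √(n : ℝ)) * (s ^ 2 + n))) := by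
  have hintegral := (hasIntegralIoi_bose_mul_bose hs).unique
    ((((((hasIntegralIoi_boseRem_mul_boseRem hs hs1).add
      ((hasIntegralIoi_one_div_sub_bose hs).const_mul (1 / 2))).sub
      ((hasIntegralIoi_boseRem_div_sq hs).const_mul (1 / 2))).add
      ((hasIntegralIoi_sq_mul_bose hs).const_mul (1 / (2 * π * s)))).sub
      (hasIntegralIoi_one_div_sub_bose_div_sq hs)).congr fun v hv => (bose_mul_bose hs hv).symm)
  have hA : 0 < 2 * √(2 * s) := by positivity
  rw [one_div_mul_eq_div, div_eq_iff hA.ne'] at hintegral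
  rw [hintegral]
  field_simp
  ring

end BoseIntegrals

section Continuation

open scoped ComplexConjugate

lemma norm_exp_neg_mul_sqrt_le {c δ y : ℝ} {z : ℂ} (hc : 0 < c) (hδ : 0 < δ) (hz : δ ≤ z.re)
    (hy : 0 < y) :
    ‖cexp (-(c * z * (√y : ℝ)))‖ ≤ 6 / (c * δ) ^ 3 * y ^ (-(3 / 2) : ℝ) := by
  have hre : (-(c * z * (√y : ℝ))).re = -(c * z.re * √y) := by
    simp only [neg_re, re_mul_ofReal, re_ofReal_mul]
  rw [norm_exp, hre]
  refine le_trans ?_ (exp_neg_mul_sqrt_le (mul_pos hc hδ) hy)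
  gcongr

-- `conj z * (z ^ 2 + m ^ 2) = ‖z‖ ^ 2 * z + m ^ 2 * conj z`; compare real parts.
lemma sq_mul_re_le_norm_mul_norm_sq_add_sq {z : ℂ} (hz : 0 ≤ z.re) (m : ℝ) :
    m ^ 2 * z.re ≤ ‖z‖ * ‖z ^ 2 + (m : ℂ) ^ 2‖ := by
  have hre : (conj z * (z ^ 2 + (m : ℂ) ^ 2)).re = (normSq z + m ^ 2) * z.re := by
    simp only [← ofReal_pow, pow_two z, mul_re, mul_im, add_re, add_im, conj_re, conj_im, ofReal_re,
      ofReal_im, normSq_apply]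
    ring
  calc m ^ 2 * z.re ≤ (normSq z + m ^ 2) * z.re := by
        gcongr
        exact le_add_of_nonneg_left (normSq_nonneg z)
    _ ≤ ‖conj z * (z ^ 2 + (m : ℂ) ^ 2)‖ := hre ▸ re_le_norm _
    _ = ‖z‖ * ‖z ^ 2 + (m : ℂ) ^ 2‖ := by rw [norm_mul, norm_conj]

lemma add_sqrt_mul_sq_add_ne_zero {y : ℝ} {z : ℂ} (hz : 0 < z.re) (hy : 0 < y) :
    (z + (√y : ℝ)) * (z ^ 2 + y) ≠ 0 := by
  refine mul_ne_zero (fun h => ?_) fun h => ?_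
  · have hre := congrArg re h
    rw [add_re, ofReal_re, zero_re] at hre
    linarith [Real.sqrt_nonneg y]
  · have hle := sq_mul_re_le_norm_mul_norm_sq_add_sq hz.le (√y)
    rw [← ofReal_pow, Real.sq_sqrt hy.le, h, norm_zero, mul_zero] at hle
    exact hle.not_gt (mul_pos hy hz)

lemma norm_one_div_add_sqrt_mul_le {δ R y : ℝ} {z : ℂ} (hδ : 0 < δ) (hz : δ ≤ z.re) (hR : ‖z‖ ≤ R)
    (hy : 0 < y) :
    ‖1 / ((z + (√y : ℝ)) * (z ^ 2 + y))‖ ≤ R / δ * y ^ (-(3 / 2) : ℝ) := by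
  have hz0 : 0 < z.re := hδ.trans_le hz
  have hlin : √y ≤ ‖z + (√y : ℝ)‖ := by
    refine le_trans ?_ (re_le_norm _)
    rw [add_re, ofReal_re]
    exact le_add_of_nonneg_left hz0.le
  have hquad : y * δ ≤ R * ‖z ^ 2 + y‖ := by
    have h := sq_mul_re_le_norm_mul_norm_sq_add_sq hz0.le (√y)
    rw [← ofReal_pow, Real.sq_sqrt hy.le] at h
    refine (mul_le_mul_of_nonneg_left hz hy.le).trans (h.trans ?_)
    gcongr
  rw [norm_div, norm_one, rpow_neg_three_half hy.le, sqrt_pow_three hy.le,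
    div_mul_div_comm, mul_one, div_le_div_iff₀
    (norm_pos_iff.2 (add_sqrt_mul_sq_add_ne_zero hz0 hy)) (by positivity), one_mul, norm_mul]
  calc δ * (y * √y) = (y * δ) * √y := by ring
    _ ≤ (R * ‖z ^ 2 + (y : ℂ)‖) * ‖z + (√y : ℝ)‖ :=
        mul_le_mul hquad hlin (Real.sqrt_nonneg y) ((mul_pos hy hδ).le.trans hquad)
    _ = R * (‖z + (√y : ℝ)‖ * ‖z ^ 2 + (y : ℂ)‖) := by ring

lemma norm_exp_neg_four_pi_mul_sqrt_le {δ : ℝ} {z : ℂ} (hδ : 0 < δ) (hz : δ ≤ z.re) (n : ℕ+) :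
    ‖cexp (-(4 * π * z * (√n : ℝ)))‖ ≤ 6 / (4 * π * δ) ^ 3 * (n : ℝ) ^ (-(3 / 2) : ℝ) := by
  simpa only [ofReal_mul, ofReal_ofNat] using
    norm_exp_neg_mul_sqrt_le (c := 4 * π) (by positivity) hδ hz (Nat.cast_pos.2 n.pos)

lemma differentiableOn_tsum_rsigma_mul_exp :
    DifferentiableOn ℂ (fun z => ∑' n : ℕ+,
      (rsigma (-(1 / 2)) n : ℂ) * cexp (-(4 * π * z * (√n : ℝ)))) {z | 0 < z.re} :=
  differentiableOn_tsum_rsigma_mul (p := 3 / 2) (by norm_num) (by norm_num)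
    (fun n => Differentiable.differentiableOn (by fun_prop))
    fun δ hδ _ => ⟨_, fun n _ hz _ => norm_exp_neg_four_pi_mul_sqrt_le hδ hz n⟩

lemma differentiableOn_tsum_rsigma_mul_one_div :
    DifferentiableOn ℂ (fun z => ∑' n : ℕ+,
      (rsigma (-(1 / 2)) n : ℂ) * (1 / ((z + (√n : ℝ)) * (z ^ 2 + n)))) {z | 0 < z.re} :=
  differentiableOn_tsum_rsigma_mul (p := 3 / 2) (by norm_num) (by norm_num)
    (fun n => (differentiableOn_const 1).div (Differentiable.differentiableOn (by fun_prop))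
      fun _ hz => mod_cast add_sqrt_mul_sq_add_ne_zero hz (Nat.cast_pos.2 n.pos))
    fun δ hδ R => ⟨R / δ, fun n z hz hzR =>
      mod_cast norm_one_div_add_sqrt_mul_le hδ hz hzR (Nat.cast_pos.2 n.pos)⟩

theorem tsum_rsigma_mul_exp_neg {z : ℂ} (hz : 0 < z.re) :
    ∑' n : ℕ+, (rsigma (-(1 / 2)) n : ℂ) * cexp (-(4 * π * z * (√n : ℝ)))
      = (1 / (2 * π * z) - 1 / 2) * riemannZeta (1 / 2) - z / 2 * riemannZeta (3 / 2)
        + riemannZeta (3 / 2) / (8 * π ^ 2 * z ^ 2)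
        + z ^ 2 / π *
          ∑' n : ℕ+, (rsigma (-(1 / 2)) n : ℂ) * (1 / ((z + (√n : ℝ)) * (z ^ 2 + n))) := by
  have hne : ∀ z ∈ {z : ℂ | 0 < z.re}, z ≠ 0 := fun z hz h => by
    rw [h] at hz
    exact lt_irrefl (0 : ℝ) hz
  have hπ : (π : ℂ) ≠ 0 := ofReal_ne_zero.2 Real.pi_ne_zero
  have hsq : DifferentiableOn ℂ (fun z : ℂ => z ^ 2 / π) {z | 0 < z.re} := by fun_prop
  have hpolar : DifferentiableOn ℂ (fun z : ℂ => (1 / (2 * π * z) - 1 / 2) * riemannZeta (1 / 2)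
      - z / 2 * riemannZeta (3 / 2) + riemannZeta (3 / 2) / (8 * π ^ 2 * z ^ 2))
      {z | 0 < z.re} := by
    fun_prop (disch := intro z hz; simp [hne z hz, hπ])
  refine eqOn_re_pos_of_eventuallyEq_ofReal (t := 1 / 2) differentiableOn_tsum_rsigma_mul_exp
    (hpolar.add (hsq.mul differentiableOn_tsum_rsigma_mul_one_div)) (by norm_num) ?_ hz
  filter_upwards [Ioo_mem_nhds (by norm_num : (0 : ℝ) < 1 / 2) one_half_lt_one] with s hs
  have h := congrArg ((↑) : ℝ → ℂ) (tsum_rsigma_mul_exp_neg_of_lt_one hs.1 hs.2)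
  push_cast at h
  rwa [ofReal_re_riemannZeta_half, ofReal_re_riemannZeta_three_half] at h

end Continuation

section ImaginaryPart

lemma im_mul_tsum_ofReal_mul {ι : Type*} {r : ι → ℝ} {f : ι → ℂ}
    (hf : Summable fun i => (r i : ℂ) * f i) (c : ℂ) :
    (c * ∑' i, (r i : ℂ) * f i).im = ∑' i, r i * (c * f i).im := by
  rw [← tsum_mul_left, im_tsum (hf.mul_left c)]
  exact tsum_congr fun i => by rw [mul_left_comm, im_ofReal_mul]

lemma im_one_add_I_mul_exp_neg (θ : ℝ) :
    ((1 + I) * cexp (-(θ * (1 - I)))).im = √2 * (Real.exp (-θ) * Real.sin (π / 4 + θ)) := by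
  have hexp : cexp (-(θ * (1 - I)))
      = (Real.exp (-θ) : ℝ) * ((Real.cos θ : ℝ) + (Real.sin θ : ℝ) * I) := by
    rw [ofReal_exp, ofReal_cos, ofReal_sin, ← exp_mul_I, ← Complex.exp_add]
    push_cast
    ring_nf
  have h2 : √2 * √2 = 2 := Real.mul_self_sqrt zero_le_two
  rw [hexp, mul_left_comm, im_ofReal_mul, Real.sin_add, Real.sin_pi_div_four,
    Real.cos_pi_div_four]
  simp only [mul_im, add_re, add_im, one_re, one_im, I_re, I_im, ofReal_re, ofReal_im, mul_re]
  linear_combination (-(Real.exp (-θ) * (Real.cos θ + Real.sin θ)) / 2) * h2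

-- With `w = a * (1 - I)` one has `w ^ 4 = -4 * a ^ 4`, so multiplying numerator and denominator
-- by `√y - w` makes the denominator real.
lemma sq_mul_one_div_add_sqrt_mul_sq_add {a y : ℝ} (ha : 0 < a) (hy : 0 < y) :
    (a * (1 - I)) ^ 2 * (1 / ((a * (1 - I) + (√y : ℝ)) * ((a * (1 - I)) ^ 2 + y)))
      = ((2 * a ^ 2 / (y ^ 2 + 4 * a ^ 4) : ℝ) : ℂ) * (a + (a - √y) * I) := by
  have hre : 0 < ((a : ℂ) * (1 - I)).re := by
    rwa [re_ofReal_mul, sub_re, one_re, I_re, sub_zero, mul_one]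
  have hden : ((y ^ 2 + 4 * a ^ 4 : ℝ) : ℂ) ≠ 0 := ofReal_ne_zero.2 (by positivity)
  have hsqrt : ((√y : ℝ) : ℂ) ^ 2 = y := by rw [← ofReal_pow, Real.sq_sqrt hy.le]
  have hmul : (a * (1 - I) + (√y : ℝ)) * ((a * (1 - I)) ^ 2 + y) * ((√y : ℝ) - a * (1 - I))
      = ((y ^ 2 + 4 * a ^ 4 : ℝ) : ℂ) := by
    push_cast
    linear_combination (y + (a * (1 - I)) ^ 2 : ℂ) * hsqrt
      - (a : ℂ) ^ 4 * (I ^ 2 - 4 * I + 5) * I_sq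
  have hnum : (a * (1 - I)) ^ 2 * ((√y : ℝ) - a * (1 - I))
      = 2 * a ^ 2 * (a + (a - (√y : ℝ)) * I) := by
    linear_combination (a : ℂ) ^ 2 * ((√y : ℝ) + a * (I - 3)) * I_sq
  rw [ofReal_div, mul_one_div, div_mul_eq_mul_div,
    div_eq_div_iff (add_sqrt_mul_sq_add_ne_zero hre hy) hden, ← hmul]
  push_cast
  linear_combination
    ((a * (1 - I) + (√y : ℝ)) * ((a * (1 - I)) ^ 2 + y) : ℂ) * hnum

lemma im_one_add_I_mul_sq_div_pi_mul {a y : ℝ} (ha : 0 < a) (hy : 0 < y) :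
    ((1 + I) * ((a * (1 - I)) ^ 2 / π) *
        (1 / ((a * (1 - I) + (√y : ℝ)) * ((a * (1 - I)) ^ 2 + y)))).im
      = 2 * a ^ 2 / π * ((2 * a - √y) / (y ^ 2 + 4 * a ^ 4)) := by
  rw [div_eq_inv_mul _ (π : ℂ), mul_assoc, mul_assoc, sq_mul_one_div_add_sqrt_mul_sq_add ha hy,
    ← ofReal_inv, mul_left_comm, mul_left_comm (1 + I), im_ofReal_mul, im_ofReal_mul]
  simp only [mul_im, mul_re, add_re, add_im, sub_re, sub_im, one_re, one_im, I_re, I_im, ofReal_re,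
    ofReal_im]
  ring

lemma im_one_add_I_mul_polar {a : ℝ} (ha : a ≠ 0) (α β : ℝ) :
    ((1 + I) * ((1 / (2 * π * (a * (1 - I))) - 1 / 2) * α - a * (1 - I) / 2 * β
        + β / (8 * π ^ 2 * (a * (1 - I)) ^ 2))).im
      = (1 / (2 * π * a) - 1 / 2) * α + β / (16 * π ^ 2 * a ^ 2) := by
  have hI : 1 - I ≠ 0 := fun h => by
    have hre := congrArg re h
    rw [sub_re, one_re, I_re, zero_re, sub_zero] at hre
    exact one_ne_zero hre
  have ha' : (a : ℂ) ≠ 0 := ofReal_ne_zero.2 ha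
  have hπ : (π : ℂ) ≠ 0 := ofReal_ne_zero.2 Real.pi_ne_zero
  have hinv : (1 + I) * (1 / (2 * π * (a * (1 - I)))) = (1 / (2 * π * a) : ℝ) * I := by
    push_cast
    field_simp
    linear_combination I_sq
  have hinvsq : (1 + I) * (β / (8 * π ^ 2 * (a * (1 - I)) ^ 2))
      = (β / (16 * π ^ 2 * a ^ 2) : ℝ) * (-1 + I) := by
    push_cast
    field_simp
    linear_combination 8 * (β : ℂ) * (3 - I) * I_sq
  have hlin : (1 + I) * (a * (1 - I) / 2 * β) = (a * β : ℝ) := by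
    push_cast
    linear_combination -(a * β / 2 : ℂ) * I_sq
  have hhalf : (1 + I) * (1 / 2) = (1 / 2 : ℝ) * (1 + I) := by
    push_cast
    ring
  rw [mul_add, mul_sub, ← mul_assoc, mul_sub, hinv, hinvsq, hlin, hhalf]
  simp only [add_im, sub_im, mul_im, mul_re, sub_re, add_re, neg_re, neg_im, one_re, one_im, I_re,
    I_im, ofReal_re, ofReal_im]
  ring

theorem tsum_rsigma_mul_exp_neg_mul_sin {a : ℝ} (ha : 0 < a) :
    √2 * ∑' n : ℕ+, rsigma (-(1 / 2)) n *
        (Real.exp (-(4 * π * a * √n)) * Real.sin (π / 4 + 4 * π * a * √n))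
      = (1 / (2 * π * a) - 1 / 2) * (riemannZeta (1 / 2)).re
        + (riemannZeta (3 / 2)).re / (16 * π ^ 2 * a ^ 2)
        + 2 * a ^ 2 / π * ∑' n : ℕ+, rsigma (-(1 / 2)) n *
          ((2 * a - √n) / (n ^ 2 + 4 * a ^ 4)) := by
  have hre : 0 < ((a : ℂ) * (1 - I)).re := by
    rwa [re_ofReal_mul, sub_re, one_re, I_re, sub_zero, mul_one]
  have hexp : Summable fun n : ℕ+ =>
      (rsigma (-(1 / 2)) n : ℂ) * cexp (-(4 * π * (a * (1 - I)) * (√n : ℝ))) :=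
    summable_rsigma_mul (p := 3 / 2) (by norm_num) (by norm_num)
      (norm_exp_neg_four_pi_mul_sqrt_le hre le_rfl)
  have hrat : Summable fun n : ℕ+ => (rsigma (-(1 / 2)) n : ℂ) *
      (1 / ((a * (1 - I) + (√n : ℝ)) * ((a * (1 - I)) ^ 2 + n))) :=
    summable_rsigma_mul (p := 3 / 2) (by norm_num) (by norm_num)
      fun n => mod_cast norm_one_div_add_sqrt_mul_le hre le_rfl le_rfl (Nat.cast_pos.2 n.pos)
  have hexp_im (n : ℕ+) : ((1 + I) * cexp (-(4 * π * (a * (1 - I)) * (√n : ℝ)))).im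
      = √2 * (Real.exp (-(4 * π * a * √n)) * Real.sin (π / 4 + 4 * π * a * √n)) := by
    rw [← im_one_add_I_mul_exp_neg]
    push_cast
    ring_nf
  have hrat_im (n : ℕ+) := im_one_add_I_mul_sq_div_pi_mul ha (Nat.cast_pos.2 n.pos : 0 < (n : ℝ))
  have him := congrArg (fun z => ((1 + I) * z).im) (tsum_rsigma_mul_exp_neg hre)
  rw [mul_add, add_im, ← ofReal_re_riemannZeta_half, ← ofReal_re_riemannZeta_three_half,
    im_one_add_I_mul_polar ha.ne', im_mul_tsum_ofReal_mul hexp, ← mul_assoc (1 + I),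
    im_mul_tsum_ofReal_mul hrat] at him
  simp only [ofReal_natCast] at hrat_im
  simpa only [hexp_im, hrat_im, mul_left_comm (rsigma _ _), tsum_mul_left] using him

end ImaginaryPart

theorem tsum_rsigma_mul_exp_neg_sqrt_mul_sin_sqrt {x : ℝ} (hx : 0 < x) :
    ∑' n : ℕ+, rsigma (-(1 / 2)) n *
        (Real.exp (-(2 * π * √(2 * n * x))) * Real.sin (π / 4 + 2 * π * √(2 * n * x)))
      = 1 / 2 * ((1 / (π * √x) - 1 / √2) * (riemannZeta (1 / 2)).re
          + 1 / (π * x * √2) * ((riemannZeta (3 / 2)).re / (4 * π)))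
        + x / (π * √2) *
          ∑' n : ℕ+, rsigma (-(1 / 2)) n * ((√(2 * x) - √n) / (x ^ 2 + n ^ 2)) := by
  obtain ⟨a, ha, rfl⟩ : ∃ a : ℝ, 0 < a ∧ 2 * a ^ 2 = x :=
    ⟨√(x / 2), Real.sqrt_pos.2 (half_pos hx), by
      rw [Real.sq_sqrt (half_pos hx).le, mul_div_cancel₀ x two_ne_zero]⟩
  have hsqrt : √(2 * a ^ 2) = √2 * a := by rw [Real.sqrt_mul zero_le_two, Real.sqrt_sq ha.le]
  have hsqrt_two : √(2 * (2 * a ^ 2)) = 2 * a := by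
    rw [show 2 * (2 * a ^ 2) = (2 * a) ^ 2 by ring, Real.sqrt_sq (by positivity)]
  have hsqrt_mul (y : ℝ) : 2 * π * √(2 * y * (2 * a ^ 2)) = 4 * π * a * √y := by
    rw [mul_right_comm 2 y, Real.sqrt_mul (by positivity), hsqrt_two]
    ring
  have hden (y : ℝ) : (2 * a ^ 2) ^ 2 + y ^ 2 = y ^ 2 + 4 * a ^ 4 := by ring
  simp only [hsqrt, hsqrt_two, hsqrt_mul, hden]
  rw [← mul_right_inj' (by positivity : √2 ≠ 0), tsum_rsigma_mul_exp_neg_mul_sin ha]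
  field_simp
  ring

lemma tsum_rsigma_half_div_sqrt_mul (f : ℝ → ℝ) :
    ∑' n : ℕ, rsigma (1 / 2) (n + 1) / √((n : ℝ) + 1) * f ((n : ℝ) + 1)
      = ∑' n : ℕ+, rsigma (-(1 / 2)) n * f n := by
  rw [tsum_pnat_eq_tsum_succ (f := fun n : ℕ => rsigma (-(1 / 2)) n * f n)]
  refine tsum_congr fun n => ?_
  rw [← rsigma_div_rpow (1 / 2) n.succ_ne_zero, ← Real.sqrt_eq_rpow, Nat.cast_succ]

theorem corollary_half_plus_general (x : ℝ) (hx : 0 < x) :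
    (∑' n : ℕ, ((rsigma (1 / 2) (n + 1) / Real.sqrt ((n : ℝ) + 1) *
        Real.exp (-(2 * π * Real.sqrt (2 * ((n : ℝ) + 1) * x))) *
        Real.sin (π / 4 + 2 * π * Real.sqrt (2 * ((n : ℝ) + 1) * x)) : ℝ) : ℂ))
    = (1 / 2) * (((1 / (π * Real.sqrt x) - 1 / Real.sqrt 2 : ℝ) : ℂ) * riemannZeta (1 / 2)
          - ((1 / (π * x * Real.sqrt 2) : ℝ) : ℂ) * riemannZeta (-1 / 2))
      + ((x / (π * Real.sqrt 2) : ℝ) : ℂ) *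
        ∑' n : ℕ, ((rsigma (1 / 2) (n + 1) / Real.sqrt ((n : ℝ) + 1) *
          ((Real.sqrt (2 * x) - Real.sqrt ((n : ℝ) + 1)) /
            (x ^ 2 + ((n : ℝ) + 1) ^ 2)) : ℝ) : ℂ) := by
  have hexp := tsum_rsigma_half_div_sqrt_mul fun y =>
    Real.exp (-(2 * π * √(2 * y * x))) * Real.sin (π / 4 + 2 * π * √(2 * y * x))
  have hrat := tsum_rsigma_half_div_sqrt_mul fun y => (√(2 * x) - √y) / (x ^ 2 + y ^ 2)
  simp only [← ofReal_tsum, mul_assoc (_ / _) (Real.exp _)]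
  rw [hexp, hrat, tsum_rsigma_mul_exp_neg_sqrt_mul_sin_sqrt hx, riemannZeta_neg_half]
  push_cast
  rw [ofReal_re_riemannZeta_half, ofReal_re_riemannZeta_three_half]
  ring

theorem corollary_half_plus (x : ℝ) (hx : 0 < x) (hxint : ∀ k : ℤ, x ≠ (k : ℝ)) :
    (∑' n : ℕ, ((rsigma (1 / 2) (n + 1) / Real.sqrt ((n : ℝ) + 1) *
        Real.exp (-(2 * π * Real.sqrt (2 * ((n : ℝ) + 1) * x))) *
        Real.sin (π / 4 + 2 * π * Real.sqrt (2 * ((n : ℝ) + 1) * x)) : ℝ) : ℂ))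
    = (1 / 2) * (((1 / (π * Real.sqrt x) - 1 / Real.sqrt 2 : ℝ) : ℂ) * riemannZeta (1 / 2)
          - ((1 / (π * x * Real.sqrt 2) : ℝ) : ℂ) * riemannZeta (-1 / 2))
      + ((x / (π * Real.sqrt 2) : ℝ) : ℂ) *
        ∑' n : ℕ, ((rsigma (1 / 2) (n + 1) / Real.sqrt ((n : ℝ) + 1) *
          ((Real.sqrt (2 * x) - Real.sqrt ((n : ℝ) + 1)) /
            (x ^ 2 + ((n : ℝ) + 1) ^ 2)) : ℝ) : ℂ) :=
  corollary_half_plus_general x hx
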